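/- Let λ have block structure k. For faces F_1, F_2 of the Gelfand–Cetlin polytope P_λ, one has F_1 ⊆ F_2 if and only if φ(F_1) ⊆ φ(F_2); that is, φ is an isomorphism of posets from the faces of P_λ (ordered by inclusion) to the faces of Γ_k (ordered by inclusion of subgraphs). Moreover dim F = dim φ(F) for every face F of P_λ, where dim F is the dimension of the affine span of F and dim φ(F) = |E(φ(F))| − |V(φ(F))| + 1. -/

import Mathlib

open Classical

noncomputable section

/-- Partial sums of the (0-indexed) sequence `k`: `nseq k i = k 0 + ⋯ + k (i-1)`;
so `nseq k i` is the paper's `n_i` for the sequence `(k_1, …, k_s) = (k 0, …, k (s-1))`. -/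
def nseq (k : ℕ → ℕ) (i : ℕ) : ℕ := ∑ j ∈ Finset.range i, k j

/-- The set of terminal vertices `T_k = {(n_i, n - n_i) : 0 ≤ i ≤ s}` of the ladder diagram. -/
def terminals (s : ℕ) (k : ℕ → ℕ) : Set (ℕ × ℕ) :=
  {v | ∃ i ≤ s, v = (nseq k i, nseq k s - nseq k i)}

/-- The vertex set of the ladder diagram `Γ_k`. -/
def ladderV (s : ℕ) (k : ℕ → ℕ) : Set (ℕ × ℕ) :=
  {v | ∃ t ∈ terminals s k, v.1 ≤ t.1 ∧ v.2 ≤ t.2}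

/-- A unit grid step: one step to the right or one step up. -/
def gridStep (v w : ℕ × ℕ) : Prop :=
  w = (v.1 + 1, v.2) ∨ w = (v.1, v.2 + 1)

/-- The edge set of the ladder diagram `Γ_k`. -/
def ladderE (s : ℕ) (k : ℕ → ℕ) : Set ((ℕ × ℕ) × (ℕ × ℕ)) :=
  {e | e.1 ∈ ladderV s k ∧ e.2 ∈ ladderV s k ∧ gridStep e.1 e.2}

/-- A combinatorial (directed) graph in the grid `ℤ_{≥0} × ℤ_{≥0}`,
given by a set of vertices and a set of edges. -/
@[ext] structure LGraph where
  V : Set (ℕ × ℕ)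
  E : Set ((ℕ × ℕ) × (ℕ × ℕ))

/-- Subgraph inclusion order on grid graphs. -/
instance : PartialOrder LGraph where
  le γ γ' := γ.V ⊆ γ'.V ∧ γ.E ⊆ γ'.E
  le_refl γ := ⟨subset_rfl, subset_rfl⟩
  le_trans a b c h h' := ⟨h.1.trans h'.1, h.2.trans h'.2⟩
  le_antisymm a b h h' := LGraph.ext (subset_antisymm h.1 h'.1) (subset_antisymm h.2 h'.2)

/-- The ladder diagram `Γ_k` as a grid graph. -/
def ladder (s : ℕ) (k : ℕ → ℕ) : LGraph :=
  ⟨ladderV s k, ladderE s k⟩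

/-- A positive path: (the graph of) a shortest path in the ladder diagram `Γ_k`
from the origin `(0,0)` to a terminal vertex. -/
def IsPositivePath (s : ℕ) (k : ℕ → ℕ) (p : LGraph) : Prop :=
  ∃ (m : ℕ) (f : ℕ → ℕ × ℕ),
    f 0 = (0, 0) ∧ f m ∈ terminals s k ∧
    (∀ i < m, gridStep (f i) (f (i + 1))) ∧
    (∀ i ≤ m, f i ∈ ladderV s k) ∧
    p.V = {v | ∃ i ≤ m, v = f i} ∧
    p.E = {e | ∃ i < m, e = (f i, f (i + 1))}

/-- A face of the ladder diagram `Γ_k`: a subgraph which contains all terminal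
vertices and is a union of positive paths. -/
def IsLadderFace (s : ℕ) (k : ℕ → ℕ) (γ : LGraph) : Prop :=
  terminals s k ⊆ γ.V ∧
  ∃ P : Set LGraph, (∀ p ∈ P, IsPositivePath s k p) ∧
    γ.V = ⋃ p ∈ P, LGraph.V p ∧ γ.E = ⋃ p ∈ P, LGraph.E p

/-- The dimension (first Betti number) of a face of a ladder diagram:
`|E(γ)| - |V(γ)| + 1`. -/
def ldim (γ : LGraph) : ℤ :=
  (γ.E.ncard : ℤ) - (γ.V.ncard : ℤ) + 1

/-- The index set `I = {(i,j) : i,j ≥ 1, i+j ≤ n}` of the coordinates of a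
Gelfand–Cetlin pattern. -/
def GCIdx (n : ℕ) : Set (ℕ × ℕ) := {p | 1 ≤ p.1 ∧ 1 ≤ p.2 ∧ p.1 + p.2 ≤ n}

/-- The entries of a Gelfand–Cetlin pattern `x`, extended by the boundary
condition `x_{i, n+1-i} = λ_i`. -/
def gcEntry (n : ℕ) (lam : ℕ → ℝ) (x : GCIdx n → ℝ) (p : ℕ × ℕ) : ℝ :=
  if h : p ∈ GCIdx n then x ⟨p, h⟩ else lam p.1

/-- The Gelfand–Cetlin polytope `P_λ`: the set of points `(x_{i,j})_{(i,j) ∈ I}`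
with `x_{i,j+1} ≥ x_{i,j} ≥ x_{i+1,j}` for all `(i,j) ∈ I`, where
`x_{i,n+1-i} = λ_i`. -/
def GCPoly (n : ℕ) (lam : ℕ → ℝ) : Set (GCIdx n → ℝ) :=
  {x | ∀ i j : ℕ, (i, j) ∈ GCIdx n →
    gcEntry n lam x (i, j) ≤ gcEntry n lam x (i, j + 1) ∧
    gcEntry n lam x (i + 1, j) ≤ gcEntry n lam x (i, j)}

/-- The subset of `P_λ` obtained by turning the inequalities
`x_{i,j+1} ≥ x_{i,j}` for `(i,j) ∈ SH` and `x_{i,j} ≥ x_{i+1,j}` for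
`(i,j) ∈ SV` into equalities. -/
def GCFaceOf (n : ℕ) (lam : ℕ → ℝ) (SH SV : Set (ℕ × ℕ)) : Set (GCIdx n → ℝ) :=
  {x | x ∈ GCPoly n lam ∧
    (∀ p ∈ SH, gcEntry n lam x (p.1, p.2 + 1) = gcEntry n lam x p) ∧
    (∀ p ∈ SV, gcEntry n lam x p = gcEntry n lam x (p.1 + 1, p.2))}

/-- A face of the GC polytope: a nonempty solution set of the system obtained
by replacing some of the defining inequalities by equalities. -/
def IsGCFace (n : ℕ) (lam : ℕ → ℝ) (F : Set (GCIdx n → ℝ)) : Prop :=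
  F.Nonempty ∧ ∃ SH SV : Set (ℕ × ℕ), SH ⊆ GCIdx n ∧ SV ⊆ GCIdx n ∧
    F = GCFaceOf n lam SH SV

/-- The dimension of (a face of) the GC polytope: the dimension of its affine span. -/
def GCdim (n : ℕ) (F : Set (GCIdx n → ℝ)) : ℕ :=
  Module.finrank ℝ (affineSpan ℝ F).direction

/-- `lam` (1-indexed) is weakly decreasing with block structure `k`: it is
constant on each block `(n_{i-1}, n_i]` and strictly decreases between
consecutive blocks. -/
def HasBlockStructure (s : ℕ) (k : ℕ → ℕ) (lam : ℕ → ℝ) : Prop :=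
  (∀ i < s, ∀ a b : ℕ, nseq k i < a → a ≤ b → b ≤ nseq k (i + 1) → lam a = lam b) ∧
  (∀ i : ℕ, 1 ≤ i → i < s → lam (nseq k i + 1) < lam (nseq k i))

/-- The edge set of the graph `φ(F)` associated to a subset `F` of the GC polytope. -/
def phiE (n : ℕ) (lam : ℕ → ℝ) (F : Set (GCIdx n → ℝ)) :
    Set ((ℕ × ℕ) × (ℕ × ℕ)) :=
  {e | (∃ i < n, e = ((0, i), (0, i + 1)) ∨ e = ((i, 0), (i + 1, 0))) ∨
    (∃ i j : ℕ, (i, j) ∈ GCIdx n ∧ e = ((i - 1, j), (i, j)) ∧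
      ∃ x ∈ F, gcEntry n lam x (i, j) < gcEntry n lam x (i, j + 1)) ∨
    (∃ i j : ℕ, (i, j) ∈ GCIdx n ∧ e = ((i, j - 1), (i, j)) ∧
      ∃ x ∈ F, gcEntry n lam x (i + 1, j) < gcEntry n lam x (i, j))}

/-- The graph `φ(F)`: its edges are given by `phiE` and its vertices are the
endpoints of its edges. -/
def phiGC (n : ℕ) (lam : ℕ → ℝ) (F : Set (GCIdx n → ℝ)) : LGraph where
  V := {v | ∃ e ∈ phiE n lam F, v = e.1 ∨ v = e.2}
  E := phiE n lam F

/-- The map `ψ`: for a subgraph `γ`, the set of points of `P_λ` where the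
inequalities corresponding to the missing edges of `γ` become equalities. -/
def psiGC (n : ℕ) (lam : ℕ → ℝ) (γ : LGraph) : Set (GCIdx n → ℝ) :=
  {x | x ∈ GCPoly n lam ∧ ∀ i j : ℕ, (i, j) ∈ GCIdx n →
    (((i - 1, j), (i, j)) ∉ γ.E → gcEntry n lam x (i, j) = gcEntry n lam x (i, j + 1)) ∧
    (((i, j - 1), (i, j)) ∉ γ.E → gcEntry n lam x (i, j) = gcEntry n lam x (i + 1, j))}
/-- The recursively defined point `x̄` of the proof of Lemma 2.6 (bijectivity):
`x̄_{i,j} = λ_i` if `i + j = n + 1`, and for `i + j ≤ n` it is determined from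
`x̄_{i,j+1}` and `x̄_{i+1,j}` according to which of the two edges
`((i-1,j),(i,j))`, `((i,j-1),(i,j))` belong to `E`. -/
def barX (n : ℕ) (lam : ℕ → ℝ) (E : Set ((ℕ × ℕ) × (ℕ × ℕ))) : ℕ → ℕ → ℝ
  | i, j =>
    if h1 : n + 1 ≤ i + j then lam i
    else if h2 : ((i - 1, j), (i, j)) ∈ E then
      if h3 : ((i, j - 1), (i, j)) ∈ E then
        (barX n lam E i (j + 1) + barX n lam E (i + 1) j) / 2
      else barX n lam E (i + 1) j
    else barX n lam E i (j + 1)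
  termination_by i j => n + 1 - (i + j)
  decreasing_by all_goals omega

/-- `α, β : ℕ → ℕ` encode an element
`w = ((α_1,β_1),…,(α_{s-1},β_{s-1})) ∈ W_{s-1}`, with the conventions
`α_0 = 0`, `β_0 = 1`, `α_s = 1`, `β_s = 0`. -/
def IsW (s : ℕ) (α β : ℕ → ℕ) : Prop :=
  (∀ i : ℕ, 1 ≤ i → i < s →
    (α i, β i) = (1, 0) ∨ (α i, β i) = (0, 1) ∨ (α i, β i) = (1, 1)) ∧
  α 0 = 0 ∧ β 0 = 1 ∧ α s = 1 ∧ β s = 0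

/-- The edge set of the subgraph `g_w` of `Γ_k`: the horizontal edge into the
terminal vertex `v_i` when `α_i = 1` and the vertical edge into `v_i` when
`β_i = 1`. -/
def gwE (s : ℕ) (k α β : ℕ → ℕ) : Set ((ℕ × ℕ) × (ℕ × ℕ)) :=
  {e | ∃ i ≤ s,
    (α i = 1 ∧
      e = ((nseq k i - 1, nseq k s - nseq k i), (nseq k i, nseq k s - nseq k i))) ∨
    (β i = 1 ∧
      e = ((nseq k i, nseq k s - nseq k i - 1), (nseq k i, nseq k s - nseq k i)))}

/-- The subgraph `g_w` of `Γ_k`. -/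
def gwGraph (s : ℕ) (k α β : ℕ → ℕ) : LGraph where
  V := {v | ∃ e ∈ gwE s k α β, v = e.1 ∨ v = e.2}
  E := gwE s k α β

/-- The interleaved sequence `r_w(k) * w̃` of length `2s - 1` (0-indexed):
entry `2j` is `k''_{j+1} = k_{j+1} + 1 - α_{j+1} - β_j` and entry `2j + 1` is
`w̃_{j+1} = α_{j+1} β_{j+1}`. -/
def rstar (s : ℕ) (k α β : ℕ → ℕ) (t : ℕ) : ℕ :=
  if t % 2 = 0 then k (t / 2) + 1 - α (t / 2 + 1) - β (t / 2)
  else α (t / 2 + 1) * β (t / 2 + 1)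

/-- `α`-value of one of the three symbols `(1,0), (0,1), (1,1)`,
encoded as `0, 1, 2 : Fin 3` respectively. -/
def aW3 (c : Fin 3) : ℕ := if c = 1 then 0 else 1

/-- `β`-value of one of the three symbols `(1,0), (0,1), (1,1)`,
encoded as `0, 1, 2 : Fin 3` respectively. -/
def bW3 (c : Fin 3) : ℕ := if c = 0 then 0 else 1

/-- The function `α` of the element of `W_{s-1}` encoded by
`c : Fin (s-1) → Fin 3` (with the conventions `α_0 = 0`, `α_s = 1`). -/
def alph (s : ℕ) (c : Fin (s - 1) → Fin 3) (i : ℕ) : ℕ :=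
  if i = 0 then 0 else if h : i - 1 < s - 1 then aW3 (c ⟨i - 1, h⟩) else 1

/-- The function `β` of the element of `W_{s-1}` encoded by
`c : Fin (s-1) → Fin 3` (with the conventions `β_0 = 1`, `β_s = 0`). -/
def bet (s : ℕ) (c : Fin (s - 1) → Fin 3) (i : ℕ) : ℕ :=
  if i = 0 then 1 else if h : i - 1 < s - 1 then bW3 (c ⟨i - 1, h⟩) else 0

/-- The interleaved sequence `r_w(k) * w̃` (of length `2s - 1`, 0-indexed) for
the element `w ∈ W_{s-1}` encoded by `c`. -/
def newk (s : ℕ) (c : Fin (s - 1) → Fin 3) (k : ℕ → ℕ) (t : ℕ) : ℕ :=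
  if t % 2 = 0 then k (t / 2) + 1 - alph s c (t / 2 + 1) - bet s c (t / 2)
  else alph s c (t / 2 + 1) * bet s c (t / 2 + 1)

/-- `|w| = Σ_{i=1}^{s-1} α_i β_i` for the element `w ∈ W_{s-1}` encoded by `c`. -/
def wsize (s : ℕ) (c : Fin (s - 1) → Fin 3) : ℕ :=
  ∑ j ∈ Finset.range (s - 1), alph s c (j + 1) * bet s c (j + 1)

/-- The subgraph `g_w` of `Γ_k` for the element `w ∈ W_{s-1}` encoded by `c`. -/
def gwGraph3 (s : ℕ) (k : ℕ → ℕ) (c : Fin (s - 1) → Fin 3) : LGraph :=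
  gwGraph s k (alph s c) (bet s c)

/-- Union of two grid graphs (union of vertex sets and of edge sets). -/
def ugraph (γ δ : LGraph) : LGraph := ⟨γ.V ∪ δ.V, γ.E ∪ δ.E⟩

/-- The generating function `F_k(t) = Σ_{γ face of Γ_k} t^{dim γ}` of the
`f`-vector of the ladder diagram `Γ_k`, as a formal power series in `t`:
the coefficient of `t^d` is the number of faces of `Γ_k` of dimension `d`. -/
def fpol (s : ℕ) (k : ℕ → ℕ) : PowerSeries ℤ :=
  PowerSeries.mk fun d =>
    (Set.ncard {γ : LGraph | IsLadderFace s k γ ∧ ldim γ = (d : ℤ)} : ℤ)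

/-- The operator `Π_{i=1}^{s-1} (∂/∂x_i + ∂/∂x_{i+1} + t ∂/∂y_i)` applied to a
polynomial in the variables `x_1, x_2, … , y_1, y_2, …` (the variable `x_{i+1}`
is `Sum.inl i` and `y_{i+1}` is `Sum.inr i`) over `ℚ[t]`. -/
def Lfold (s : ℕ) (f : MvPolynomial (ℕ ⊕ ℕ) (Polynomial ℚ)) :
    MvPolynomial (ℕ ⊕ ℕ) (Polynomial ℚ) :=
  (List.range (s - 1)).foldl
    (fun g i =>
      MvPolynomial.pderiv (Sum.inl i) g + MvPolynomial.pderiv (Sum.inl (i + 1)) g +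
        (Polynomial.X : Polynomial ℚ) • MvPolynomial.pderiv (Sum.inr i) g) f

/-- The operator `D_w = Π_{i=1}^{s-1} (∂/∂x_i)^{1-α_i} (∂/∂x_{i+1})^{1-β_i}
(t ∂/∂y_i)^{α_i β_i}` for the element `w ∈ W_{s-1}` encoded by
`c : Fin (s-1) → Fin 3` (`0 ↦ (1,0)`, `1 ↦ (0,1)`, `2 ↦ (1,1)`). -/
def DfoldC (s : ℕ) (c : Fin (s - 1) → Fin 3)
    (f : MvPolynomial (ℕ ⊕ ℕ) (Polynomial ℚ)) : MvPolynomial (ℕ ⊕ ℕ) (Polynomial ℚ) :=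
  (List.finRange (s - 1)).foldl
    (fun g i =>
      if c i = 0 then MvPolynomial.pderiv (Sum.inl ((i : ℕ) + 1)) g
      else if c i = 1 then MvPolynomial.pderiv (Sum.inl (i : ℕ)) g
      else (Polynomial.X : Polynomial ℚ) • MvPolynomial.pderiv (Sum.inr (i : ℕ)) g) f

/-- The operator `D_w` for the element `w ∈ W_{s-1}` encoded by `α, β : ℕ → ℕ`. -/
def DfoldW (s : ℕ) (α β : ℕ → ℕ)
    (f : MvPolynomial (ℕ ⊕ ℕ) (Polynomial ℚ)) : MvPolynomial (ℕ ⊕ ℕ) (Polynomial ℚ) :=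
  (List.range (s - 1)).foldl
    (fun g j =>
      if α (j + 1) = 1 ∧ β (j + 1) = 1 then
        (Polynomial.X : Polynomial ℚ) • MvPolynomial.pderiv (Sum.inr j) g
      else if α (j + 1) = 1 then MvPolynomial.pderiv (Sum.inl (j + 1)) g
      else MvPolynomial.pderiv (Sum.inl j) g) f

/-- Substitution of `0` for all the variables `y_j = Sum.inr j`. -/
def setYzero :
    MvPolynomial (ℕ ⊕ ℕ) (Polynomial ℚ) →ₐ[Polynomial ℚ] MvPolynomial (ℕ ⊕ ℕ) (Polynomial ℚ) :=
  MvPolynomial.aeval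
    (Sum.elim (fun i => MvPolynomial.X (Sum.inl i)) fun _ => (0 : MvPolynomial (ℕ ⊕ ℕ) (Polynomial ℚ)))
end

/-!
The faces of `Γ_k` can be recognised vertex by vertex: a grid graph in the triangle `i + j ≤ n` is
a face exactly when every vertex below the antidiagonal `i + j = n` has an outgoing edge, every
vertex other than the origin has an incoming edge, and the vertices on the antidiagonal are the
terminal ones. For a pattern `x`, the square inequality `x_{i+1,j} ≤ x_{i,j+1}` is a chain of two
interlacing inequalities in two ways, through `x_{i,j}` and through `x_{i+1,j+1}`. It is strict iff
one of the two inequalities in either chain is, so `(i, j)` has an incoming edge in `φ(F)` iff it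
has an outgoing one; hence `φ(F)` is a face of `Γ_k`.

The inverse of `φ` sends `γ` to the face `ψ(γ)` of patterns with an equality at every missing edge.
That `ψ(γ)` has a point with strict inequalities at all edges of `γ` is seen by filling in the
pattern from the antidiagonal downwards: an entry is forced where an incoming edge is missing, and
any value strictly between its upper and right neighbours will do where both are present. The same
recursion with boundary values `0` shows that a vector of the linear system defining the direction
of `ψ(γ)` is given by its arbitrary values at the vertices with two incoming edges. Counting the
edges of `γ` by their endpoints shows that there are `|E(γ)| - |V(γ)| + 1` such vertices.
-/

section General

lemma lt_or_lt_iff_lt {α : Type*} [LinearOrder α] {a b c : α} (hab : a ≤ b) (hbc : b ≤ c) :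
    a < b ∨ b < c ↔ a < c := by
  refine ⟨fun h ↦ h.elim (·.trans_le hbc) hab.trans_lt, fun hac ↦ ?_⟩
  rcases hab.lt_or_eq with h | rfl
  exacts [.inl h, .inr hac]

lemma exists_seq_of_forall_exists {α : Type*} {r : α → α → Prop} {S : ℕ → Set α} {N : ℕ}
    (h : ∀ i < N, ∀ u ∈ S i, ∃ w ∈ S (i + 1), r u w) {v : α} (hv : v ∈ S 0) :
    ∃ g : ℕ → α, g 0 = v ∧ (∀ i ≤ N, g i ∈ S i) ∧ ∀ i < N, r (g i) (g (i + 1)) := by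
  have : Nonempty α := ⟨v⟩
  choose! next hnext hr using h
  have hmem : ∀ i ≤ N, (Nat.rec v next i : α) ∈ S i := by
    intro i
    induction i with
    | zero => exact fun _ ↦ hv
    | succ i ih => exact fun hi ↦ hnext i hi _ (ih (Nat.le_of_succ_le hi))
  exact ⟨fun i ↦ Nat.rec v next i, rfl, hmem, fun i hi ↦ hr i hi _ (hmem i hi.le)⟩

lemma direction_affineSpan_eq_of_forall_exists_add_smul_mem {K M : Type*} [Field K]
    [AddCommGroup M] [Module K M] {S : Set M} {W : Submodule K M} {x : M} (hx : x ∈ S)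
    (hsub : ∀ y ∈ S, ∀ z ∈ S, y - z ∈ W) (hex : ∀ y ∈ W, ∃ t : K, t ≠ 0 ∧ x + t • y ∈ S) :
    (affineSpan K S).direction = W := by
  rw [direction_affineSpan]
  refine le_antisymm ?_ fun y hy ↦ ?_
  · rw [vectorSpan_def, Submodule.span_le]
    rintro _ ⟨y, hy, z, hz, rfl⟩
    exact hsub y hy z hz
  · obtain ⟨t, ht, hmem⟩ := hex y hy
    rw [← Submodule.smul_mem_iff _ ht]
    simpa using vsub_mem_vectorSpan K hmem hx

end General

section Grid

variable {s m : ℕ} {k : ℕ → ℕ} {u v : ℕ × ℕ} {f : ℕ → ℕ × ℕ}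

lemma gridStep.add_eq (h : gridStep u v) : v.1 + v.2 = u.1 + u.2 + 1 := by
  rcases h with rfl | rfl <;> dsimp only <;> lia

lemma gridStep.le (h : gridStep u v) : u ≤ v := by
  rcases h with rfl | rfl <;> simp [Prod.le_def]

lemma gridStep.eq_or_eq (h : gridStep u v) :
    1 ≤ v.1 ∧ u = (v.1 - 1, v.2) ∨ 1 ≤ v.2 ∧ u = (v.1, v.2 - 1) := by
  rcases h with rfl | rfl <;> simp

lemma add_eq_of_gridStep (h0 : f 0 = (0, 0)) (hf : ∀ i < m, gridStep (f i) (f (i + 1))) :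
    ∀ i ≤ m, (f i).1 + (f i).2 = i := by
  intro i hi
  induction i with
  | zero => simp [h0]
  | succ i ih => rw [(hf i hi).add_eq, ih (Nat.le_of_succ_le hi)]

lemma le_last_of_gridStep (hf : ∀ i < m, gridStep (f i) (f (i + 1))) {i : ℕ} (hi : i ≤ m) :
    f i ≤ f m := by
  induction hi using Nat.decreasingInduction with
  | self => exact le_rfl
  | of_succ i hi ih => exact (hf i hi).le.trans ih

lemma nseq_mono (k : ℕ → ℕ) : Monotone (nseq k) := fun _ _ h ↦
  Finset.sum_le_sum_of_subset (Finset.range_mono h)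

lemma add_eq_of_mem_terminals (hv : v ∈ terminals s k) : v.1 + v.2 = nseq k s := by
  obtain ⟨i, hi, rfl⟩ := hv
  exact Nat.add_sub_of_le (nseq_mono k hi)

end Grid

/-- A local description of the faces of a ladder diagram: the edges of `γ` are grid steps, the
vertices lie on the levels `v.1 + v.2 ≤ n`, each of them can be entered (above level `0`) and left
(below level `n`) along edges of `γ`, and those on level `n` are exactly the points of `T`. -/
structure LGraph.IsSaturated (γ : LGraph) (n : ℕ) (T : Set (ℕ × ℕ)) : Prop where
  gridStep_of_mem : ∀ {u v}, (u, v) ∈ γ.E → gridStep u v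
  fst_mem : ∀ {u v}, (u, v) ∈ γ.E → u ∈ γ.V
  snd_mem : ∀ {u v}, (u, v) ∈ γ.E → v ∈ γ.V
  add_le : ∀ {v}, v ∈ γ.V → v.1 + v.2 ≤ n
  exists_out : ∀ {v}, v ∈ γ.V → v.1 + v.2 < n → ∃ w, (v, w) ∈ γ.E
  exists_in : ∀ {v}, v ∈ γ.V → 0 < v.1 + v.2 → ∃ u, (u, v) ∈ γ.E
  mem_iff : ∀ {v}, v.1 + v.2 = n → (v ∈ γ.V ↔ v ∈ T)

section Faces

variable {s n : ℕ} {k : ℕ → ℕ} {γ : LGraph} {T : Set (ℕ × ℕ)} {u v : ℕ × ℕ}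

namespace LGraph.IsSaturated

lemma exists_seq_from (h : γ.IsSaturated n T) (hv : v ∈ γ.V) :
    ∃ g : ℕ → ℕ × ℕ, g 0 = v ∧ g (n - (v.1 + v.2)) ∈ T ∧
      ∀ i < n - (v.1 + v.2), (g i, g (i + 1)) ∈ γ.E := by
  let S : ℕ → Set (ℕ × ℕ) := fun i ↦ {w | w ∈ γ.V ∧ w.1 + w.2 = v.1 + v.2 + i}
  have hstep : ∀ i < n - (v.1 + v.2), ∀ u ∈ S i, ∃ w ∈ S (i + 1), (u, w) ∈ γ.E := by
    rintro i hi u ⟨hu, hlevel⟩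
    obtain ⟨w, hw⟩ := h.exists_out hu (by lia)
    have := (h.gridStep_of_mem hw).add_eq
    exact ⟨w, ⟨h.snd_mem hw, by lia⟩, hw⟩
  obtain ⟨g, h0, hg, hE⟩ := exists_seq_of_forall_exists hstep ⟨hv, rfl⟩
  obtain ⟨hlast, hlevel⟩ := hg _ le_rfl
  rw [Nat.add_sub_of_le (h.add_le hv)] at hlevel
  exact ⟨g, h0, (h.mem_iff hlevel).1 hlast, hE⟩

lemma exists_seq_to (h : γ.IsSaturated n T) (hv : v ∈ γ.V) :
    ∃ g : ℕ → ℕ × ℕ, g 0 = v ∧ g (v.1 + v.2) = (0, 0) ∧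
      ∀ i < v.1 + v.2, (g (i + 1), g i) ∈ γ.E := by
  let S : ℕ → Set (ℕ × ℕ) := fun i ↦ {w | w ∈ γ.V ∧ w.1 + w.2 + i = v.1 + v.2}
  have hstep : ∀ i < v.1 + v.2, ∀ u ∈ S i, ∃ w ∈ S (i + 1), (w, u) ∈ γ.E := by
    rintro i hi u ⟨hu, hlevel⟩
    obtain ⟨w, hw⟩ := h.exists_in hu (by lia)
    have := (h.gridStep_of_mem hw).add_eq
    exact ⟨w, ⟨h.fst_mem hw, by lia⟩, hw⟩
  obtain ⟨g, h0, hg, hE⟩ := exists_seq_of_forall_exists hstep ⟨hv, rfl⟩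
  have hlevel := (hg _ le_rfl).2
  exact ⟨g, h0, Prod.ext (by dsimp only; lia) (by dsimp only; lia), hE⟩

lemma exists_path_through (h : γ.IsSaturated n T) (he : (u, v) ∈ γ.E) :
    ∃ f : ℕ → ℕ × ℕ, f 0 = (0, 0) ∧ f n ∈ T ∧ (∀ i < n, (f i, f (i + 1)) ∈ γ.E) ∧
      ∃ i < n, f i = u ∧ f (i + 1) = v := by
  obtain ⟨b, hb0, hb, hbE⟩ := h.exists_seq_to (h.fst_mem he)
  obtain ⟨g, hg0, hg, hgE⟩ := h.exists_seq_from (h.snd_mem he)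
  have hlevel := (h.gridStep_of_mem he).add_eq
  have hle := h.add_le (h.snd_mem he)
  set a := u.1 + u.2
  rw [hlevel] at hg hgE hle
  refine ⟨fun i ↦ if i ≤ a then b (a - i) else g (i - (a + 1)), by simp [hb],
    by simpa [(Nat.lt_of_succ_le hle).not_ge] using hg, fun i hi ↦ ?_, a, hle, by simp [hb0],
    by simp [hg0]⟩
  rcases lt_trichotomy i a with hia | rfl | hia
  · have := hbE (a - (i + 1)) (by lia)
    rw [show a - (i + 1) + 1 = a - i by lia] at this
    simpa [hia.le, Nat.succ_le_iff.2 hia] using this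
  · simpa [hb0, hg0] using he
  · have := hgE (i - (a + 1)) (by lia)
    rw [show i - (a + 1) + 1 = i - a by lia] at this
    simpa [hia.not_ge, hia.le.not_gt, Nat.add_sub_add_right] using this

lemma exists_mem_E (h : γ.IsSaturated n T) (hn : 0 < n) (hv : v ∈ γ.V) :
    ∃ e ∈ γ.E, v = e.1 ∨ v = e.2 := by
  rcases Nat.eq_zero_or_pos (v.1 + v.2) with h0 | h0
  · obtain ⟨w, hw⟩ := h.exists_out hv (h0 ▸ hn)
    exact ⟨_, hw, .inl rfl⟩
  · obtain ⟨u, hu⟩ := h.exists_in hv h0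
    exact ⟨_, hu, .inr rfl⟩

end LGraph.IsSaturated

lemma isPositivePath_of_gridStep {f : ℕ → ℕ × ℕ} (h0 : f 0 = (0, 0)) (hn : f n ∈ terminals s k)
    (hf : ∀ i < n, gridStep (f i) (f (i + 1))) :
    IsPositivePath s k ⟨{v | ∃ i ≤ n, v = f i}, {e | ∃ i < n, e = (f i, f (i + 1))}⟩ :=
  ⟨n, f, h0, hn, hf, fun _ hi ↦ ⟨f n, hn, le_last_of_gridStep hf hi⟩, rfl, rfl⟩

lemma LGraph.IsSaturated.exists_isPositivePath (h : γ.IsSaturated n (terminals s k))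
    (he : (u, v) ∈ γ.E) : ∃ p ≤ γ, IsPositivePath s k p ∧ (u, v) ∈ p.E ∧ u ∈ p.V ∧ v ∈ p.V := by
  obtain ⟨f, h0, hn, hE, i, hi, rfl, rfl⟩ := h.exists_path_through he
  refine ⟨_, ⟨?_, ?_⟩, isPositivePath_of_gridStep h0 hn fun i hi ↦ h.gridStep_of_mem (hE i hi),
    ⟨i, hi, rfl⟩, ⟨i, hi.le, rfl⟩, ⟨i + 1, hi, rfl⟩⟩
  · rintro _ ⟨j, hj, rfl⟩
    rcases hj.lt_or_eq with hj | rfl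
    · exact h.fst_mem (hE j hj)
    · have := h.snd_mem (hE (j - 1) (by lia))
      rwa [Nat.sub_add_cancel (by lia)] at this
  · rintro _ ⟨j, hj, rfl⟩
    exact hE j hj

lemma LGraph.IsSaturated.isLadderFace (h : γ.IsSaturated (nseq k s) (terminals s k))
    (hn : 0 < nseq k s) : IsLadderFace s k γ := by
  refine ⟨fun v hv ↦ (h.mem_iff (add_eq_of_mem_terminals hv)).2 hv,
    {p | p ≤ γ ∧ IsPositivePath s k p}, fun p hp ↦ hp.2, ?_, ?_⟩
  · refine subset_antisymm (fun v hv ↦ ?_) (Set.iUnion₂_subset fun p hp ↦ hp.1.1)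
    obtain ⟨⟨u, w⟩, he, hve⟩ := h.exists_mem_E hn hv
    obtain ⟨p, hle, hp, -, hu, hw⟩ := h.exists_isPositivePath he
    exact Set.mem_biUnion ⟨hle, hp⟩ (by rcases hve with rfl | rfl <;> assumption)
  · refine subset_antisymm (fun e he ↦ ?_) (Set.iUnion₂_subset fun p hp ↦ hp.1.2)
    obtain ⟨p, hle, hp, hep, -⟩ := h.exists_isPositivePath he
    exact Set.mem_biUnion ⟨hle, hp⟩ hep

lemma IsPositivePath.isSaturated {p : LGraph} (hp : IsPositivePath s k p) :
    p.IsSaturated (nseq k s) (p.V ∩ terminals s k) := by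
  obtain ⟨m, f, h0, hm, hf, -, hV, hE⟩ := hp
  have hlevel := add_eq_of_gridStep h0 hf
  obtain rfl : m = nseq k s := by rw [← hlevel m le_rfl, add_eq_of_mem_terminals hm]
  constructor <;> simp only [hV, hE, Set.mem_ofPred_eq, Prod.mk.injEq]
  · rintro _ _ ⟨i, hi, rfl, rfl⟩
    exact hf i hi
  · rintro _ _ ⟨i, hi, rfl, -⟩
    exact ⟨i, hi.le, rfl⟩
  · rintro _ _ ⟨i, hi, -, rfl⟩
    exact ⟨i + 1, hi, rfl⟩
  · rintro _ ⟨i, hi, rfl⟩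
    exact (hlevel i hi).trans_le hi
  · rintro _ ⟨i, hi, rfl⟩ hlt
    exact ⟨f (i + 1), i, hlevel i hi ▸ hlt, rfl, rfl⟩
  · rintro _ ⟨i, hi, rfl⟩ hlt
    rw [hlevel i hi] at hlt
    exact ⟨f (i - 1), i - 1, by lia, rfl, by rw [Nat.sub_add_cancel hlt]⟩
  · intro v hv
    refine ⟨?_, fun h ↦ h.1⟩
    rintro ⟨i, hi, rfl⟩
    obtain rfl : i = nseq k s := by rw [← hlevel i hi, hv]
    exact ⟨⟨_, hi, rfl⟩, hm⟩

lemma LGraph.IsSaturated.of_biUnion {P : Set LGraph}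
    (hP : ∀ p ∈ P, p.IsSaturated n (p.V ∩ T)) (hV : γ.V = ⋃ p ∈ P, p.V)
    (hE : γ.E = ⋃ p ∈ P, p.E) : γ.IsSaturated n (γ.V ∩ T) := by
  constructor <;> simp only [hV, hE, Set.mem_iUnion₂, Set.mem_inter_iff]
  · rintro u v ⟨p, hp, he⟩
    exact (hP p hp).gridStep_of_mem he
  · rintro u v ⟨p, hp, he⟩
    exact ⟨p, hp, (hP p hp).fst_mem he⟩
  · rintro u v ⟨p, hp, he⟩
    exact ⟨p, hp, (hP p hp).snd_mem he⟩
  · rintro v ⟨p, hp, hv⟩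
    exact (hP p hp).add_le hv
  · rintro v ⟨p, hp, hv⟩ hlt
    exact ((hP p hp).exists_out hv hlt).imp fun w hw ↦ ⟨p, hp, hw⟩
  · rintro v ⟨p, hp, hv⟩ hlt
    exact ((hP p hp).exists_in hv hlt).imp fun u hu ↦ ⟨p, hp, hu⟩
  · refine fun hn ↦ ⟨?_, fun h ↦ h.1⟩
    rintro ⟨p, hp, hv⟩
    exact ⟨⟨p, hp, hv⟩, (((hP p hp).mem_iff hn).1 hv).2⟩

theorem isLadderFace_iff_isSaturated (hn : 0 < nseq k s) :
    IsLadderFace s k γ ↔ γ.IsSaturated (nseq k s) (terminals s k) := by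
  refine ⟨?_, fun h ↦ h.isLadderFace hn⟩
  rintro ⟨hT, P, hP, hV, hE⟩
  simpa only [Set.inter_eq_right.2 hT] using
    LGraph.IsSaturated.of_biUnion (fun p hp ↦ (hP p hp).isSaturated) hV hE

end Faces

namespace LGraph

/-- `γ` contains the horizontal edge entering `v`. If `v.1 = 0`, truncated subtraction turns this
edge into a loop, which a saturated graph never contains. -/
def HasLeft (γ : LGraph) (v : ℕ × ℕ) : Prop := ((v.1 - 1, v.2), v) ∈ γ.E

/-- `γ` contains the vertical edge entering `v`; see `LGraph.HasLeft` for the case `v.2 = 0`. -/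
def HasBelow (γ : LGraph) (v : ℕ × ℕ) : Prop := ((v.1, v.2 - 1), v) ∈ γ.E

namespace IsSaturated

variable {n : ℕ} {γ γ' : LGraph} {T : Set (ℕ × ℕ)} {u v : ℕ × ℕ} {i j : ℕ}

lemma one_le_fst (h : γ.IsSaturated n T) (hv : γ.HasLeft v) : 1 ≤ v.1 := by
  have := (h.gridStep_of_mem hv).add_eq
  dsimp only at this
  lia

lemma one_le_snd (h : γ.IsSaturated n T) (hv : γ.HasBelow v) : 1 ≤ v.2 := by
  have := (h.gridStep_of_mem hv).add_eq
  dsimp only at this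
  lia

lemma eq_left_or_eq_below (h : γ.IsSaturated n T) (he : (u, v) ∈ γ.E) :
    γ.HasLeft v ∧ u = (v.1 - 1, v.2) ∨ γ.HasBelow v ∧ u = (v.1, v.2 - 1) := by
  rcases (h.gridStep_of_mem he).eq_or_eq with ⟨-, rfl⟩ | ⟨-, rfl⟩
  exacts [.inl ⟨he, rfl⟩, .inr ⟨he, rfl⟩]

lemma mem_V_iff_in (h : γ.IsSaturated n T) (hv : 0 < v.1 + v.2) :
    v ∈ γ.V ↔ γ.HasLeft v ∨ γ.HasBelow v := by
  refine ⟨fun hmem ↦ ?_, fun hmem ↦ hmem.elim h.snd_mem h.snd_mem⟩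
  obtain ⟨u, hu⟩ := h.exists_in hmem hv
  exact (h.eq_left_or_eq_below hu).imp And.left And.left

lemma mem_V_iff_out (h : γ.IsSaturated n T) (hv : i + j < n) :
    (i, j) ∈ γ.V ↔ γ.HasLeft (i + 1, j) ∨ γ.HasBelow (i, j + 1) := by
  refine ⟨fun hmem ↦ ?_, fun hmem ↦ hmem.elim h.fst_mem h.fst_mem⟩
  obtain ⟨w, hw⟩ := h.exists_out hmem hv
  rcases h.gridStep_of_mem hw with rfl | rfl
  exacts [.inl hw, .inr hw]

lemma hasLeft_axis (h : γ.IsSaturated n T) (hT : (n, 0) ∈ T) (hi : 1 ≤ i) (hin : i ≤ n) :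
    γ.HasLeft (i, 0) := by
  have hleft : ∀ a, 1 ≤ a → (a, 0) ∈ γ.V → γ.HasLeft (a, 0) := fun a ha hmem ↦
    ((h.mem_V_iff_in (Nat.add_pos_left ha 0)).1 hmem).resolve_right
      fun hb ↦ absurd (h.one_le_snd hb) (by simp)
  refine hleft i hi ?_
  induction hin using Nat.decreasingInduction with
  | self => exact (h.mem_iff rfl).2 hT
  | of_succ a _ ih => exact h.fst_mem (hleft (a + 1) a.succ_pos (ih a.succ_pos))

lemma hasBelow_axis (h : γ.IsSaturated n T) (hT : (0, n) ∈ T) (hj : 1 ≤ j) (hjn : j ≤ n) :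
    γ.HasBelow (0, j) := by
  have hbelow : ∀ b, 1 ≤ b → (0, b) ∈ γ.V → γ.HasBelow (0, b) := fun b hb hmem ↦
    ((h.mem_V_iff_in (Nat.add_pos_right 0 hb)).1 hmem).resolve_left
      fun hl ↦ absurd (h.one_le_fst hl) (by simp)
  refine hbelow j hj ?_
  induction hjn using Nat.decreasingInduction with
  | self => exact (h.mem_iff (zero_add n)).2 hT
  | of_succ b _ ih => exact h.fst_mem (hbelow (b + 1) b.succ_pos (ih b.succ_pos))

lemma le_of_forall (h : γ.IsSaturated n T) (h' : γ'.IsSaturated n T) (hn : 0 < n)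
    (hright : (n, 0) ∈ T) (htop : (0, n) ∈ T)
    (hleft : ∀ v ∈ GCIdx n, γ.HasLeft v → γ'.HasLeft v)
    (hbelow : ∀ v ∈ GCIdx n, γ.HasBelow v → γ'.HasBelow v) : γ ≤ γ' := by
  have hE : γ.E ⊆ γ'.E := by
    rintro ⟨u, i, j⟩ he
    have hle : i + j ≤ n := h.add_le (h.snd_mem he)
    rcases h.eq_left_or_eq_below he with ⟨hv, rfl⟩ | ⟨hv, rfl⟩
    · rcases Nat.eq_zero_or_pos j with rfl | hj
      exacts [h'.hasLeft_axis hright (h.one_le_fst hv) hle,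
        hleft _ ⟨h.one_le_fst hv, hj, hle⟩ hv]
    · rcases Nat.eq_zero_or_pos i with rfl | hi
      exacts [h'.hasBelow_axis htop (h.one_le_snd hv) (by lia),
        hbelow _ ⟨hi, h.one_le_snd hv, hle⟩ hv]
  refine ⟨fun v hv ↦ ?_, hE⟩
  obtain ⟨e, he, rfl | rfl⟩ := h.exists_mem_E hn hv
  exacts [h'.fst_mem (hE he), h'.snd_mem (hE he)]

end IsSaturated

end LGraph

section BlockStructure

variable {s a i : ℕ} {k : ℕ → ℕ} {lam : ℕ → ℝ}

/-- The points `(i, n - i)` of the antidiagonal at which `λ` jumps down from `λ_i` to `λ_{i+1}`,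
with the convention that it also does so at both ends `i = 0` and `i = n`. -/
def descentVertices (n : ℕ) (lam : ℕ → ℝ) : Set (ℕ × ℕ) :=
  {v | v.1 + v.2 = n ∧ (v.1 = 0 ∨ v.2 = 0 ∨ lam (v.1 + 1) < lam v.1)}

lemma nseq_pos (hs : 1 ≤ s) (hk : ∀ i < s, 0 < k i) : 0 < nseq k s :=
  Finset.sum_pos (fun i hi ↦ hk i (Finset.mem_range.1 hi))
    (Finset.nonempty_range_iff.2 (Nat.one_le_iff_ne_zero.1 hs))

lemma exists_block (ha : a < nseq k s) : ∃ i < s, nseq k i ≤ a ∧ a < nseq k (i + 1) := by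
  induction s with
  | zero => simp [nseq] at ha
  | succ s ih =>
    rcases lt_or_ge a (nseq k s) with has | hsa
    · obtain ⟨i, hi, hai⟩ := ih has
      exact ⟨i, hi.trans s.lt_succ_self, hai⟩
    · exact ⟨s, s.lt_succ_self, hsa, ha⟩

namespace HasBlockStructure

lemma eq_succ_or_eq_nseq (hlam : HasBlockStructure s k lam) (ha : a < nseq k s) :
    lam a = lam (a + 1) ∨ ∃ i < s, a = nseq k i := by
  obtain ⟨i, hi, hia, hai⟩ := exists_block ha
  rcases hia.lt_or_eq with hia | rfl
  exacts [.inl (hlam.1 i hi a (a + 1) hia a.le_succ hai), .inr ⟨i, hi, rfl⟩]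

lemma lt_of_nseq_pos (hlam : HasBlockStructure s k lam) (hi : i < s) (hpos : 0 < nseq k i) :
    lam (nseq k i + 1) < lam (nseq k i) :=
  hlam.2 i (Nat.one_le_iff_ne_zero.2 fun h ↦ by simp [h, nseq] at hpos) hi

lemma antitoneOn (hlam : HasBlockStructure s k lam) :
    AntitoneOn lam (Set.Icc 1 (nseq k s)) := by
  refine antitoneOn_of_add_one_le Set.ordConnected_Icc fun a _ ha ha' ↦ ?_
  rcases hlam.eq_succ_or_eq_nseq ha'.2 with h | ⟨i, hi, rfl⟩
  exacts [h.ge, (hlam.lt_of_nseq_pos hi ha.1).le]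

lemma terminals_eq (hlam : HasBlockStructure s k lam) :
    terminals s k = descentVertices (nseq k s) lam := by
  ext ⟨a, b⟩
  constructor
  · intro hv
    refine ⟨add_eq_of_mem_terminals hv, ?_⟩
    obtain ⟨i, hi, hab⟩ := hv
    obtain ⟨rfl, rfl⟩ := Prod.mk.inj hab
    rcases hi.lt_or_eq with hi | rfl
    · exact (Nat.eq_zero_or_pos _).imp_right fun h ↦ .inr (hlam.lt_of_nseq_pos hi h)
    · exact .inr (.inl (Nat.sub_self _))
  · rintro ⟨hab, h⟩
    dsimp only at hab h
    suffices ∃ i ≤ s, a = nseq k i by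
      obtain ⟨i, hi, rfl⟩ := this
      exact ⟨i, hi, Prod.ext rfl (Nat.eq_sub_of_add_eq' hab)⟩
    rcases Nat.eq_zero_or_pos b with rfl | hb
    · exact ⟨s, le_rfl, hab⟩
    rcases h with rfl | rfl | hlt
    · exact ⟨0, s.zero_le, rfl⟩
    · exact absurd hb (lt_irrefl 0)
    · obtain ⟨i, hi, h⟩ := (hlam.eq_succ_or_eq_nseq (by lia)).resolve_left hlt.ne'
      exact ⟨i, hi.le, h⟩

end HasBlockStructure

end BlockStructure

section Phi

variable {n i j : ℕ} {lam : ℕ → ℝ} {F F' : Set (GCIdx n → ℝ)} {u v : ℕ × ℕ}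

lemma gcEntry_of_lt {x : GCIdx n → ℝ} (h : n < i + j) : gcEntry n lam x (i, j) = lam i :=
  dif_neg fun hij ↦ h.not_ge hij.2.2

lemma gcEntry_of_mem {x : GCIdx n → ℝ} {p : ℕ × ℕ} (hp : p ∈ GCIdx n) :
    gcEntry n lam x p = x ⟨p, hp⟩ :=
  dif_pos hp

lemma phiGC_mono (h : F ⊆ F') : phiGC n lam F ≤ phiGC n lam F' := by
  have hE : phiE n lam F ⊆ phiE n lam F' := by
    rintro e (he | ⟨i, j, hij, he, x, hx, hlt⟩ | ⟨i, j, hij, he, x, hx, hlt⟩)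
    exacts [.inl he, .inr (.inl ⟨i, j, hij, he, x, h hx, hlt⟩),
      .inr (.inr ⟨i, j, hij, he, x, h hx, hlt⟩)]
  exact ⟨fun v ⟨e, he, hv⟩ ↦ ⟨e, hE he, hv⟩, hE⟩

lemma hasLeft_phiGC (hv : (i, j) ∈ GCIdx n) : (phiGC n lam F).HasLeft (i, j) ↔
    ∃ x ∈ F, gcEntry n lam x (i, j) < gcEntry n lam x (i, j + 1) := by
  refine ⟨?_, fun hx ↦ .inr (.inl ⟨i, j, hv, rfl, hx⟩)⟩
  obtain ⟨hi, hj, -⟩ := hv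
  rintro (⟨a, -, h | h⟩ | ⟨a, b, -, h, hx⟩ | ⟨a, b, -, h, -⟩) <;>
    simp only [Prod.mk.injEq] at h hi hj
  · lia
  · lia
  · rwa [h.2.1, h.2.2]
  · lia

lemma hasBelow_phiGC (hv : (i, j) ∈ GCIdx n) : (phiGC n lam F).HasBelow (i, j) ↔
    ∃ x ∈ F, gcEntry n lam x (i + 1, j) < gcEntry n lam x (i, j) := by
  refine ⟨?_, fun hx ↦ .inr (.inr ⟨i, j, hv, rfl, hx⟩)⟩
  obtain ⟨hi, hj, -⟩ := hv
  rintro (⟨a, -, h | h⟩ | ⟨a, b, -, h, -⟩ | ⟨a, b, -, h, hx⟩) <;>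
    simp only [Prod.mk.injEq] at h hi hj
  · lia
  · lia
  · lia
  · rwa [h.2.1, h.2.2]

lemma gridStep_of_mem_phiE (he : (u, v) ∈ phiE n lam F) : gridStep u v := by
  rcases he with ⟨a, -, h | h⟩ | ⟨a, b, ⟨ha, -, -⟩, h, -⟩ | ⟨a, b, ⟨-, hb, -⟩, h, -⟩ <;>
    obtain ⟨rfl, rfl⟩ := Prod.mk.inj h
  exacts [.inr rfl, .inl rfl, .inl (Prod.ext (Nat.sub_add_cancel ha).symm rfl),
    .inr (Prod.ext rfl (Nat.sub_add_cancel hb).symm)]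

lemma add_le_of_mem_phiE (he : (u, v) ∈ phiE n lam F) : v.1 + v.2 ≤ n := by
  rcases he with ⟨a, ha, h | h⟩ | ⟨a, b, hab, h, -⟩ | ⟨a, b, hab, h, -⟩ <;>
    obtain ⟨-, rfl⟩ := Prod.mk.inj h
  exacts [by dsimp only; lia, ha, hab.2.2, hab.2.2]

lemma mem_phiE_vertical (hj : j < n) : ((0, j), (0, j + 1)) ∈ phiE n lam F :=
  .inl ⟨j, hj, .inl rfl⟩

lemma mem_phiE_horizontal (hi : i < n) : ((i, 0), (i + 1, 0)) ∈ phiE n lam F :=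
  .inl ⟨i, hi, .inr rfl⟩

lemma hasLeft_or_hasBelow_phiGC (hF : F ⊆ GCPoly n lam) (hv : (i, j) ∈ GCIdx n) :
    (phiGC n lam F).HasLeft (i, j) ∨ (phiGC n lam F).HasBelow (i, j) ↔
      ∃ x ∈ F, gcEntry n lam x (i + 1, j) < gcEntry n lam x (i, j + 1) := by
  rw [hasLeft_phiGC hv, hasBelow_phiGC hv, or_comm, ← exists_or]
  refine exists_congr fun x ↦ ?_
  rw [← and_or_left]
  exact and_congr_right fun hx ↦ lt_or_lt_iff_lt (hF hx i j hv).2 (hF hx i j hv).1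

lemma hasLeft_or_hasBelow_succ_phiGC (hF : F ⊆ GCPoly n lam) (hi : 1 ≤ i) (hj : 1 ≤ j)
    (hij : i + j < n) :
    (phiGC n lam F).HasLeft (i + 1, j) ∨ (phiGC n lam F).HasBelow (i, j + 1) ↔
      ∃ x ∈ F, gcEntry n lam x (i + 1, j) < gcEntry n lam x (i, j + 1) := by
  have hright : (i + 1, j) ∈ GCIdx n := ⟨i.succ_pos, hj, by dsimp only; lia⟩
  have habove : (i, j + 1) ∈ GCIdx n := ⟨hi, j.succ_pos, hij⟩
  rw [hasLeft_phiGC hright, hasBelow_phiGC habove, ← exists_or]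
  refine exists_congr fun x ↦ ?_
  rw [← and_or_left]
  exact and_congr_right fun hx ↦
    lt_or_lt_iff_lt (hF hx (i + 1) j hright).1 (hF hx i (j + 1) habove).2

lemma mem_phiGC_V_iff (hF : F ⊆ GCPoly n lam) (hv : (i, j) ∈ GCIdx n) :
    (i, j) ∈ (phiGC n lam F).V ↔
      ∃ x ∈ F, gcEntry n lam x (i + 1, j) < gcEntry n lam x (i, j + 1) := by
  constructor
  · rintro ⟨⟨u, w⟩, he, rfl | rfl⟩
    · have hlt : i + j < n := by
        have := (gridStep_of_mem_phiE he).add_eq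
        have := add_le_of_mem_phiE he
        dsimp only at *
        lia
      rw [← hasLeft_or_hasBelow_succ_phiGC hF hv.1 hv.2.1 hlt]
      rcases gridStep_of_mem_phiE he with rfl | rfl
      exacts [.inl he, .inr he]
    · rw [← hasLeft_or_hasBelow_phiGC hF hv]
      rcases (gridStep_of_mem_phiE he).eq_or_eq with ⟨-, rfl⟩ | ⟨-, rfl⟩
      exacts [.inl he, .inr he]
  · rw [← hasLeft_or_hasBelow_phiGC hF hv]
    rintro (he | he) <;> exact ⟨_, he, .inr rfl⟩

lemma add_le_of_mem_phiGC_V (hv : v ∈ (phiGC n lam F).V) : v.1 + v.2 ≤ n := by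
  obtain ⟨⟨u, w⟩, he, rfl | rfl⟩ := hv
  · exact Nat.le_of_succ_le ((gridStep_of_mem_phiE he).add_eq.symm.trans_le (add_le_of_mem_phiE he))
  · exact add_le_of_mem_phiE he

lemma mem_phiGC_V_iff_mem_descentVertices (hF : F ⊆ GCPoly n lam) (hne : F.Nonempty) (hn : 0 < n)
    (hv : v.1 + v.2 = n) : v ∈ (phiGC n lam F).V ↔ v ∈ descentVertices n lam := by
  obtain ⟨i, j⟩ := v
  obtain ⟨m, rfl⟩ := Nat.exists_eq_succ_of_ne_zero hn.ne'
  rcases Nat.eq_zero_or_pos i with rfl | hi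
  · obtain rfl : j = m + 1 := by simpa using hv
    exact iff_of_true ⟨_, mem_phiE_vertical m.lt_succ_self, .inr rfl⟩ ⟨hv, .inl rfl⟩
  rcases Nat.eq_zero_or_pos j with rfl | hj
  · obtain rfl : i = m + 1 := hv
    exact iff_of_true ⟨_, mem_phiE_horizontal m.lt_succ_self, .inr rfl⟩ ⟨rfl, .inr (.inl rfl)⟩
  rw [mem_phiGC_V_iff hF ⟨hi, hj, hv.le⟩]
  simp only [gcEntry_of_lt (show m + 1 < i + (j + 1) by dsimp only at hv; lia),
    gcEntry_of_lt (show m + 1 < i + 1 + j by dsimp only at hv; lia)]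
  simp [descentVertices, hv, hi.ne', hj.ne', show ∃ x, x ∈ F from hne]

theorem isSaturated_phiGC (hF : F ⊆ GCPoly n lam) (hne : F.Nonempty) (hn : 0 < n) :
    (phiGC n lam F).IsSaturated n (descentVertices n lam) where
  gridStep_of_mem := gridStep_of_mem_phiE
  fst_mem he := ⟨_, he, .inl rfl⟩
  snd_mem he := ⟨_, he, .inr rfl⟩
  add_le := add_le_of_mem_phiGC_V
  exists_out := by
    rintro ⟨i, j⟩ hv hlt
    rcases Nat.eq_zero_or_pos i with rfl | hi
    · exact ⟨_, mem_phiE_vertical (by simpa using hlt)⟩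
    rcases Nat.eq_zero_or_pos j with rfl | hj
    · exact ⟨_, mem_phiE_horizontal (by simpa using hlt)⟩
    rw [mem_phiGC_V_iff hF ⟨hi, hj, hlt.le⟩, ← hasLeft_or_hasBelow_succ_phiGC hF hi hj hlt] at hv
    exact hv.elim (⟨_, ·⟩) (⟨_, ·⟩)
  exists_in := by
    rintro ⟨i, j⟩ hv hpos
    have hle := add_le_of_mem_phiGC_V hv
    rcases i with _ | i
    · rcases j with _ | j
      · exact absurd hpos (lt_irrefl 0)
      · exact ⟨_, mem_phiE_vertical (by simpa using hle)⟩
    rcases j with _ | j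
    · exact ⟨_, mem_phiE_horizontal hle⟩
    have hij : (i + 1, j + 1) ∈ GCIdx n := ⟨i.succ_pos, j.succ_pos, hle⟩
    rw [mem_phiGC_V_iff hF hij, ← hasLeft_or_hasBelow_phiGC hF hij] at hv
    exact hv.elim (⟨_, ·⟩) (⟨_, ·⟩)
  mem_iff := mem_phiGC_V_iff_mem_descentVertices hF hne hn

lemma IsGCFace.subset_GCPoly (hF : IsGCFace n lam F) : F ⊆ GCPoly n lam := by
  obtain ⟨-, _, _, -, -, rfl⟩ := hF
  exact fun x hx ↦ hx.1

end Phi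

section Psi

variable {n i j : ℕ} {lam : ℕ → ℝ} {F : Set (GCIdx n → ℝ)} {γ γ' : LGraph} {x : GCIdx n → ℝ}

lemma psiGC_mono (h : γ ≤ γ') : psiGC n lam γ ⊆ psiGC n lam γ' := fun _ hx ↦
  ⟨hx.1, fun i j hij ↦ (hx.2 i j hij).imp (· ∘ mt (@h.2 _)) (· ∘ mt (@h.2 _))⟩

theorem IsGCFace.psiGC_phiGC (hF : IsGCFace n lam F) : psiGC n lam (phiGC n lam F) = F := by
  refine subset_antisymm ?_ fun x hx ↦
    ⟨hF.subset_GCPoly hx, fun i j hij ↦ ⟨fun he ↦ ?_, fun he ↦ ?_⟩⟩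
  · obtain ⟨-, SH, SV, hSH, hSV, rfl⟩ := hF
    refine fun x hx ↦ ⟨hx.1, fun p hp ↦ ((hx.2 p.1 p.2 (hSH hp)).1 fun he ↦ ?_).symm,
      fun p hp ↦ (hx.2 p.1 p.2 (hSV hp)).2 fun he ↦ ?_⟩
    · obtain ⟨y, hy, hlt⟩ := (hasLeft_phiGC (hSH hp)).1 he
      exact hlt.ne' (hy.2.1 p hp)
    · obtain ⟨y, hy, hlt⟩ := (hasBelow_phiGC (hSV hp)).1 he
      exact hlt.ne' (hy.2.2 p hp)
  · exact (hF.subset_GCPoly hx i j hij).1.eq_of_not_lt fun hlt ↦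
      he ((hasLeft_phiGC hij).2 ⟨x, hx, hlt⟩)
  · exact (hF.subset_GCPoly hx i j hij).2.eq_of_not_lt' fun hlt ↦
      he ((hasBelow_phiGC hij).2 ⟨x, hx, hlt⟩)

theorem IsGCFace.subset_iff_phiGC_le {F' : Set (GCIdx n → ℝ)} (hF : IsGCFace n lam F)
    (hF' : IsGCFace n lam F') : F ⊆ F' ↔ phiGC n lam F ≤ phiGC n lam F' := by
  refine ⟨phiGC_mono, fun h ↦ ?_⟩
  rw [← hF.psiGC_phiGC, ← hF'.psiGC_phiGC]
  exact psiGC_mono h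

/-- `x` is a pattern of `P_λ` whose strict inequalities correspond exactly to the edges of `γ`:
a point in the relative interior of the face `psiGC n lam γ`. -/
structure IsInteriorPoint (n : ℕ) (lam : ℕ → ℝ) (γ : LGraph) (x : GCIdx n → ℝ) : Prop where
  mem_GCPoly : x ∈ GCPoly n lam
  hasLeft_iff : ∀ {i j}, (i, j) ∈ GCIdx n →
    (γ.HasLeft (i, j) ↔ gcEntry n lam x (i, j) < gcEntry n lam x (i, j + 1))
  hasBelow_iff : ∀ {i j}, (i, j) ∈ GCIdx n →
    (γ.HasBelow (i, j) ↔ gcEntry n lam x (i + 1, j) < gcEntry n lam x (i, j))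

namespace IsInteriorPoint

lemma of_lt_of_eq
    (hl : ∀ i j, (i, j) ∈ GCIdx n → γ.HasLeft (i, j) →
      gcEntry n lam x (i, j) < gcEntry n lam x (i, j + 1))
    (hl' : ∀ i j, (i, j) ∈ GCIdx n → ¬ γ.HasLeft (i, j) →
      gcEntry n lam x (i, j) = gcEntry n lam x (i, j + 1))
    (hb : ∀ i j, (i, j) ∈ GCIdx n → γ.HasBelow (i, j) →
      gcEntry n lam x (i + 1, j) < gcEntry n lam x (i, j))
    (hb' : ∀ i j, (i, j) ∈ GCIdx n → ¬ γ.HasBelow (i, j) →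
      gcEntry n lam x (i, j) = gcEntry n lam x (i + 1, j)) :
    IsInteriorPoint n lam γ x where
  mem_GCPoly i j hij :=
    ⟨(Classical.em (γ.HasLeft (i, j))).elim (fun h ↦ (hl i j hij h).le) fun h ↦ (hl' i j hij h).le,
      (Classical.em (γ.HasBelow (i, j))).elim (fun h ↦ (hb i j hij h).le)
        fun h ↦ (hb' i j hij h).ge⟩
  hasLeft_iff hij := ⟨hl _ _ hij, fun hlt ↦ by_contra fun h ↦ hlt.ne (hl' _ _ hij h)⟩
  hasBelow_iff hij := ⟨hb _ _ hij, fun hlt ↦ by_contra fun h ↦ hlt.ne' (hb' _ _ hij h)⟩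

lemma mem_psiGC (hx : IsInteriorPoint n lam γ x) : x ∈ psiGC n lam γ :=
  ⟨hx.mem_GCPoly, fun i j hij ↦
    ⟨fun he ↦ (hx.mem_GCPoly i j hij).1.eq_of_not_lt (mt (hx.hasLeft_iff hij).2 he),
      fun he ↦ (hx.mem_GCPoly i j hij).2.eq_of_not_lt' (mt (hx.hasBelow_iff hij).2 he)⟩⟩

lemma isGCFace_psiGC (hx : IsInteriorPoint n lam γ x) : IsGCFace n lam (psiGC n lam γ) := by
  refine ⟨⟨x, hx.mem_psiGC⟩, {p | p ∈ GCIdx n ∧ ¬ γ.HasLeft p}, {p | p ∈ GCIdx n ∧ ¬ γ.HasBelow p},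
    fun p hp ↦ hp.1, fun p hp ↦ hp.1, Set.ext fun y ↦ and_congr_right fun _ ↦ ?_⟩
  exact ⟨fun h ↦ ⟨fun p hp ↦ ((h p.1 p.2 hp.1).1 hp.2).symm, fun p hp ↦ (h p.1 p.2 hp.1).2 hp.2⟩,
    fun h i j hij ↦ ⟨fun he ↦ (h.1 (i, j) ⟨hij, he⟩).symm, fun he ↦ h.2 (i, j) ⟨hij, he⟩⟩⟩

lemma hasLeft_phiGC_psiGC_iff (hx : IsInteriorPoint n lam γ x) (hij : (i, j) ∈ GCIdx n) :
    (phiGC n lam (psiGC n lam γ)).HasLeft (i, j) ↔ γ.HasLeft (i, j) := by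
  rw [hasLeft_phiGC hij]
  refine ⟨?_, fun he ↦ ⟨x, hx.mem_psiGC, (hx.hasLeft_iff hij).1 he⟩⟩
  rintro ⟨y, hy, hlt⟩
  exact by_contra fun he ↦ hlt.ne ((hy.2 i j hij).1 he)

lemma hasBelow_phiGC_psiGC_iff (hx : IsInteriorPoint n lam γ x) (hij : (i, j) ∈ GCIdx n) :
    (phiGC n lam (psiGC n lam γ)).HasBelow (i, j) ↔ γ.HasBelow (i, j) := by
  rw [hasBelow_phiGC hij]
  refine ⟨?_, fun he ↦ ⟨x, hx.mem_psiGC, (hx.hasBelow_iff hij).1 he⟩⟩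
  rintro ⟨y, hy, hlt⟩
  exact by_contra fun he ↦ hlt.ne' ((hy.2 i j hij).2 he)

theorem phiGC_psiGC (hx : IsInteriorPoint n lam γ x)
    (hγ : γ.IsSaturated n (descentVertices n lam)) (hn : 0 < n) :
    phiGC n lam (psiGC n lam γ) = γ := by
  have hφ := isSaturated_phiGC (lam := lam) (F := psiGC n lam γ) (fun _ hy ↦ hy.1)
    ⟨x, hx.mem_psiGC⟩ hn
  have hright : (n, 0) ∈ descentVertices n lam := ⟨rfl, .inr (.inl rfl)⟩
  have htop : (0, n) ∈ descentVertices n lam := ⟨zero_add n, .inl rfl⟩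
  exact le_antisymm
    (hφ.le_of_forall hγ hn hright htop (fun _ hv ↦ (hx.hasLeft_phiGC_psiGC_iff hv).1)
      fun _ hv ↦ (hx.hasBelow_phiGC_psiGC_iff hv).1)
    (hγ.le_of_forall hφ hn hright htop (fun _ hv ↦ (hx.hasLeft_phiGC_psiGC_iff hv).2)
      fun _ hv ↦ (hx.hasBelow_phiGC_psiGC_iff hv).2)

end IsInteriorPoint

end Psi

section Fill

variable {n i j : ℕ} {lam b : ℕ → ℝ} {m : ℕ × ℕ → ℝ → ℝ → ℝ} {γ : LGraph} {T : Set (ℕ × ℕ)}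

/-- The triangular array `z` with boundary values `z_{i,n+1-i} = b_i` whose entry `z_{i,j}` is
`z_{i,j+1}` if the horizontal edge of `γ` entering `(i, j)` is missing, `z_{i+1,j}` if only the
vertical one is missing, and `m (i, j) z_{i,j+1} z_{i+1,j}` if both are present. With `b = λ` and
`m` the midpoint it is the array `barX`. -/
noncomputable def gcFill (n : ℕ) (γ : LGraph) (b : ℕ → ℝ) (m : ℕ × ℕ → ℝ → ℝ → ℝ) (i j : ℕ) : ℝ :=
  if n < i + j then b i
  else if γ.HasLeft (i, j) then
    if γ.HasBelow (i, j) then m (i, j) (gcFill n γ b m i (j + 1)) (gcFill n γ b m (i + 1) j)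
    else gcFill n γ b m (i + 1) j
  else gcFill n γ b m i (j + 1)
termination_by n + 1 - (i + j)

lemma gcFill_of_lt (h : n < i + j) : gcFill n γ b m i j = b i := by
  rw [gcFill, if_pos h]

lemma gcFill_of_not_hasLeft (h : i + j ≤ n) (hl : ¬ γ.HasLeft (i, j)) :
    gcFill n γ b m i j = gcFill n γ b m i (j + 1) := by
  rw [gcFill, if_neg h.not_gt, if_neg hl]

lemma gcFill_of_hasLeft_of_not_hasBelow (h : i + j ≤ n) (hl : γ.HasLeft (i, j))
    (hb : ¬ γ.HasBelow (i, j)) : gcFill n γ b m i j = gcFill n γ b m (i + 1) j := by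
  rw [gcFill, if_neg h.not_gt, if_pos hl, if_neg hb]

lemma gcFill_of_hasLeft_of_hasBelow (h : i + j ≤ n) (hl : γ.HasLeft (i, j))
    (hb : γ.HasBelow (i, j)) : gcFill n γ b m i j =
      m (i, j) (gcFill n γ b m i (j + 1)) (gcFill n γ b m (i + 1) j) := by
  rw [gcFill, if_neg h.not_gt, if_pos hl, if_pos hb]

lemma gcFill_of_not_hasBelow (hγ : γ.IsSaturated n T)
    (heq : ∀ i j, (i, j) ∈ GCIdx n → i + j = n → (i, j) ∉ γ.V → b i = b (i + 1))
    {i j : ℕ} (hij : (i, j) ∈ GCIdx n) (hb : ¬ γ.HasBelow (i, j)) :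
    gcFill n γ b m i j = gcFill n γ b m (i + 1) j := by
  by_cases hl : γ.HasLeft (i, j)
  · exact gcFill_of_hasLeft_of_not_hasBelow hij.2.2 hl hb
  rw [gcFill_of_not_hasLeft hij.2.2 hl]
  have hV : (i, j) ∉ γ.V := by
    rw [hγ.mem_V_iff_in (Nat.add_pos_left hij.1 j)]
    exact not_or_intro hl hb
  obtain ⟨hi, hj, hle⟩ := id hij
  dsimp only at hi hj hle
  rcases hle.lt_or_eq with hlt | hn
  · rw [hγ.mem_V_iff_out hlt, not_or] at hV
    rw [gcFill_of_not_hasLeft (i := i + 1) (by lia) hV.1]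
    exact gcFill_of_not_hasBelow hγ heq ⟨hi, j.succ_pos, hlt⟩ hV.2
  · rw [gcFill_of_lt (by lia), gcFill_of_lt (by lia), heq i j hij hn hV]
termination_by n - j

lemma gcFill_lt_above (hm : ∀ v a c, c < a → m v a c < a) (hij : i + j ≤ n)
    (hlt : gcFill n γ b m (i + 1) j < gcFill n γ b m i (j + 1)) (hl : γ.HasLeft (i, j)) :
    gcFill n γ b m i j < gcFill n γ b m i (j + 1) := by
  by_cases hb : γ.HasBelow (i, j)
  · rw [gcFill_of_hasLeft_of_hasBelow hij hl hb]
    exact hm _ _ _ hlt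
  · rwa [gcFill_of_hasLeft_of_not_hasBelow hij hl hb]

lemma gcFill_right_lt (hm : ∀ v a c, c < a → c < m v a c) (hij : i + j ≤ n)
    (hlt : gcFill n γ b m (i + 1) j < gcFill n γ b m i (j + 1)) (hb : γ.HasBelow (i, j)) :
    gcFill n γ b m (i + 1) j < gcFill n γ b m i j := by
  by_cases hl : γ.HasLeft (i, j)
  · rw [gcFill_of_hasLeft_of_hasBelow hij hl hb]
    exact hm _ _ _ hlt
  · rwa [gcFill_of_not_hasLeft hij hl]

lemma gcFill_right_lt_above (hγ : γ.IsSaturated n T)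
    (hm : ∀ v a c, c < a → m v a c < a) (hm' : ∀ v a c, c < a → c < m v a c)
    (heq : ∀ i j, (i, j) ∈ GCIdx n → i + j = n → (i, j) ∉ γ.V → b i = b (i + 1))
    (hlt : ∀ i j, (i, j) ∈ GCIdx n → i + j = n → (i, j) ∈ γ.V → b (i + 1) < b i)
    {i j : ℕ} (hij : (i, j) ∈ GCIdx n) (hV : (i, j) ∈ γ.V) :
    gcFill n γ b m (i + 1) j < gcFill n γ b m i (j + 1) := by
  obtain ⟨hi, hj, hle⟩ := id hij
  dsimp only at hi hj hle
  rcases hle.lt_or_eq with hle | hn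
  · have hright : (i + 1, j) ∈ GCIdx n := ⟨i.succ_pos, hj, by dsimp only; lia⟩
    have habove : (i, j + 1) ∈ GCIdx n := ⟨hi, j.succ_pos, hle⟩
    have hleft : γ.HasLeft (i + 1, j) →
        gcFill n γ b m (i + 1) j < gcFill n γ b m (i + 1) (j + 1) := fun h ↦
      gcFill_lt_above hm hright.2.2
        (gcFill_right_lt_above hγ hm hm' heq hlt hright (hγ.snd_mem h)) h
    have hbelow : γ.HasBelow (i, j + 1) →
        gcFill n γ b m (i + 1) (j + 1) < gcFill n γ b m i (j + 1) := fun h ↦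
      gcFill_right_lt hm' habove.2.2
        (gcFill_right_lt_above hγ hm hm' heq hlt habove (hγ.snd_mem h)) h
    by_cases hl : γ.HasLeft (i + 1, j)
    · by_cases hb : γ.HasBelow (i, j + 1)
      · exact (hleft hl).trans (hbelow hb)
      · rw [gcFill_of_not_hasBelow hγ heq habove hb]
        exact hleft hl
    · rw [gcFill_of_not_hasLeft hright.2.2 hl]
      exact hbelow (((hγ.mem_V_iff_out hle).1 hV).resolve_left hl)
  · rw [gcFill_of_lt (by lia), gcFill_of_lt (by lia)]
    exact hlt i j hij hn hV
termination_by n - (i + j)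

/-- The point of the pattern space with coordinates `gcFill`. -/
noncomputable def gcFillPoint (n : ℕ) (γ : LGraph) (b : ℕ → ℝ) (m : ℕ × ℕ → ℝ → ℝ → ℝ) :
    GCIdx n → ℝ :=
  fun p ↦ gcFill n γ b m p.1.1 p.1.2

lemma gcEntry_gcFillPoint (hi : 1 ≤ i) (hj : 1 ≤ j) :
    gcEntry n b (gcFillPoint n γ b m) (i, j) = gcFill n γ b m i j := by
  rcases le_or_gt (i + j) n with h | h
  · exact gcEntry_of_mem ⟨hi, hj, h⟩
  · rw [gcEntry_of_lt h, gcFill_of_lt h]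

theorem exists_isInteriorPoint (hlam : AntitoneOn lam (Set.Icc 1 n))
    (hγ : γ.IsSaturated n (descentVertices n lam)) : ∃ x, IsInteriorPoint n lam γ x := by
  have hlt : ∀ i j, (i, j) ∈ GCIdx n → i + j = n → (i, j) ∈ γ.V → lam (i + 1) < lam i := by
    intro i j hij hn hV
    rcases ((hγ.mem_iff hn).1 hV).2 with h | h | h
    exacts [absurd h (Nat.one_le_iff_ne_zero.1 hij.1),
      absurd h (Nat.one_le_iff_ne_zero.1 hij.2.1), h]
  have heq : ∀ i j, (i, j) ∈ GCIdx n → i + j = n → (i, j) ∉ γ.V → lam i = lam (i + 1) := by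
    intro i j hij hn hV
    have hj : 1 ≤ j := hij.2.1
    refine le_antisymm (not_lt.1 fun h ↦ hV ((hγ.mem_iff hn).2 ⟨hn, .inr (.inr h)⟩))
      (hlam ⟨hij.1, by lia⟩ ⟨i.succ_pos, by lia⟩ i.le_succ)
  let mid : ℕ × ℕ → ℝ → ℝ → ℝ := fun _ a c ↦ (a + c) / 2
  have hm : ∀ v a c, c < a → mid v a c < a := fun v a c h ↦ by dsimp only [mid]; linarith
  have hm' : ∀ v a c, c < a → c < mid v a c := fun v a c h ↦ by dsimp only [mid]; linarith
  have hgap : ∀ i j, (i, j) ∈ GCIdx n → (i, j) ∈ γ.V →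
      gcFill n γ lam mid (i + 1) j < gcFill n γ lam mid i (j + 1) := fun i j ↦
    gcFill_right_lt_above hγ hm hm' heq hlt
  refine ⟨gcFillPoint n γ lam mid, .of_lt_of_eq ?_ ?_ ?_ ?_⟩ <;> intro i j hij he <;>
    obtain ⟨hi, hj, hle⟩ := id hij <;> dsimp only at hi hj hle <;>
    rw [gcEntry_gcFillPoint hi hj, gcEntry_gcFillPoint (by lia) (by lia)]
  · exact gcFill_lt_above hm hle (hgap i j hij (hγ.snd_mem he)) he
  · exact gcFill_of_not_hasLeft hle he
  · exact gcFill_right_lt hm' hle (hgap i j hij (hγ.snd_mem he)) he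
  · exact gcFill_of_not_hasBelow hγ heq hij he

end Fill

section Directions

open Topology

variable {n i j : ℕ} {lam : ℕ → ℝ} {γ : LGraph} {T : Set (ℕ × ℕ)} {x y : GCIdx n → ℝ}

/-- The linear part of the affine function `x ↦ gcEntry n lam x p`. -/
noncomputable def gcEntryₗ (n : ℕ) (p : ℕ × ℕ) : (GCIdx n → ℝ) →ₗ[ℝ] ℝ where
  toFun x := gcEntry n 0 x p
  map_add' x y := by unfold gcEntry; split_ifs <;> simp
  map_smul' t x := by unfold gcEntry; split_ifs <;> simp

lemma gcEntry_add_smul (t : ℝ) (p : ℕ × ℕ) :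
    gcEntry n lam (x + t • y) p = gcEntry n lam x p + t * gcEntryₗ n p y := by
  by_cases hp : p ∈ GCIdx n <;> simp [gcEntryₗ, gcEntry, hp]

lemma gcEntryₗ_sub (lam : ℕ → ℝ) (p : ℕ × ℕ) :
    gcEntryₗ n p (x - y) = gcEntry n lam x p - gcEntry n lam y p := by
  by_cases hp : p ∈ GCIdx n <;> simp [gcEntryₗ, gcEntry, hp]

/-- The linear system associated with `psiGC n lam γ`: one homogeneous equation for each edge
missing from `γ`, and boundary values `0` instead of `λ`. -/
noncomputable def gcDirections (n : ℕ) (γ : LGraph) : Submodule ℝ (GCIdx n → ℝ) where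
  carrier := {y | ∀ i j, (i, j) ∈ GCIdx n →
    (¬ γ.HasLeft (i, j) → gcEntryₗ n (i, j) y = gcEntryₗ n (i, j + 1) y) ∧
    (¬ γ.HasBelow (i, j) → gcEntryₗ n (i, j) y = gcEntryₗ n (i + 1, j) y)}
  zero_mem' := by simp
  add_mem' {y z} hy hz i j hij := by
    simp only [map_add]
    exact ⟨fun he ↦ congrArg₂ _ ((hy i j hij).1 he) ((hz i j hij).1 he),
      fun he ↦ congrArg₂ _ ((hy i j hij).2 he) ((hz i j hij).2 he)⟩
  smul_mem' t y hy i j hij := by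
    simp only [map_smul]
    exact ⟨fun he ↦ congrArg _ ((hy i j hij).1 he), fun he ↦ congrArg _ ((hy i j hij).2 he)⟩

lemma finite_GCIdx (n : ℕ) : (GCIdx n).Finite :=
  (Set.finite_Iic (n, n)).subset fun _ hp ↦ ⟨by have := hp.2.2; lia, by have := hp.2.2; lia⟩

lemma sub_mem_gcDirections (hx : x ∈ psiGC n lam γ) (hy : y ∈ psiGC n lam γ) :
    x - y ∈ gcDirections n γ := fun i j hij ↦ by
  simp only [gcEntryₗ_sub lam]
  exact ⟨fun he ↦ congrArg₂ _ ((hx.2 i j hij).1 he) ((hy.2 i j hij).1 he),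
    fun he ↦ congrArg₂ _ ((hx.2 i j hij).2 he) ((hy.2 i j hij).2 he)⟩

lemma tendsto_gcEntry_add_smul (x y : GCIdx n → ℝ) (p : ℕ × ℕ) :
    Filter.Tendsto (fun t : ℝ ↦ gcEntry n lam (x + t • y) p) (𝓝 0) (𝓝 (gcEntry n lam x p)) := by
  simp only [gcEntry_add_smul]
  exact Continuous.tendsto' (by fun_prop) _ _ (by simp)

lemma IsInteriorPoint.eventually_add_smul_mem_psiGC (hx : IsInteriorPoint n lam γ x)
    (hy : y ∈ gcDirections n γ) : ∀ᶠ t : ℝ in 𝓝 0, x + t • y ∈ psiGC n lam γ := by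
  have hleft : ∀ t : ℝ, ∀ i j, (i, j) ∈ GCIdx n → ¬ γ.HasLeft (i, j) →
      gcEntry n lam (x + t • y) (i, j) = gcEntry n lam (x + t • y) (i, j + 1) := by
    intro t i j hij he
    rw [gcEntry_add_smul, gcEntry_add_smul, (hx.mem_psiGC.2 i j hij).1 he, (hy i j hij).1 he]
  have hbelow : ∀ t : ℝ, ∀ i j, (i, j) ∈ GCIdx n → ¬ γ.HasBelow (i, j) →
      gcEntry n lam (x + t • y) (i, j) = gcEntry n lam (x + t • y) (i + 1, j) := by
    intro t i j hij he
    rw [gcEntry_add_smul, gcEntry_add_smul, (hx.mem_psiGC.2 i j hij).2 he, (hy i j hij).2 he]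
  have hlim := tendsto_gcEntry_add_smul (lam := lam) x y
  have hle : ∀ᶠ t : ℝ in 𝓝 0, ∀ p ∈ GCIdx n,
      gcEntry n lam (x + t • y) p ≤ gcEntry n lam (x + t • y) (p.1, p.2 + 1) ∧
      gcEntry n lam (x + t • y) (p.1 + 1, p.2) ≤ gcEntry n lam (x + t • y) p := by
    rw [Filter.eventually_all_finite (finite_GCIdx n)]
    rintro ⟨i, j⟩ hij
    refine .and ?_ ?_
    · by_cases he : γ.HasLeft (i, j)
      · exact ((hlim _).eventually_lt (hlim _) ((hx.hasLeft_iff hij).1 he)).mono fun _ ↦ le_of_lt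
      · exact .of_forall fun t ↦ (hleft t i j hij he).le
    · by_cases he : γ.HasBelow (i, j)
      · exact ((hlim _).eventually_lt (hlim _) ((hx.hasBelow_iff hij).1 he)).mono fun _ ↦ le_of_lt
      · exact .of_forall fun t ↦ (hbelow t i j hij he).ge
  exact hle.mono fun t ht ↦
    ⟨fun i j ↦ ht (i, j), fun i j hij ↦ ⟨hleft t i j hij, hbelow t i j hij⟩⟩

theorem IsInteriorPoint.direction_affineSpan_psiGC (hx : IsInteriorPoint n lam γ x) :
    (affineSpan ℝ (psiGC n lam γ)).direction = gcDirections n γ := by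
  refine direction_affineSpan_eq_of_forall_exists_add_smul_mem hx.mem_psiGC
    (fun y hy z hz ↦ sub_mem_gcDirections hy hz) fun y hy ↦ ?_
  have hev : ∀ᶠ t : ℝ in 𝓝[≠] 0, x + t • y ∈ psiGC n lam γ :=
    (hx.eventually_add_smul_mem_psiGC hy).filter_mono nhdsWithin_le_nhds
  exact ((eventually_mem_nhdsWithin (a := (0 : ℝ)) (s := {0}ᶜ)).and hev).exists

/-- The vertices of `γ` with two incoming edges. -/
def LGraph.merges (γ : LGraph) : Set (ℕ × ℕ) := {v | γ.HasLeft v ∧ γ.HasBelow v}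

lemma LGraph.IsSaturated.merges_subset_GCIdx (hγ : γ.IsSaturated n T) : γ.merges ⊆ GCIdx n :=
  fun _ hv ↦ ⟨hγ.one_le_fst hv.1, hγ.one_le_snd hv.2, hγ.add_le (hγ.snd_mem hv.1)⟩

lemma gcEntryₗ_eq_zero_of_mem_gcDirections (hy : y ∈ gcDirections n γ)
    (h0 : ∀ v ∈ γ.merges, gcEntryₗ n v y = 0) (i j : ℕ) : gcEntryₗ n (i, j) y = 0 := by
  by_cases hij : (i, j) ∈ GCIdx n
  · have : i + j ≤ n := hij.2.2
    by_cases hl : γ.HasLeft (i, j)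
    · by_cases hb : γ.HasBelow (i, j)
      · exact h0 _ ⟨hl, hb⟩
      · rw [(hy i j hij).2 hb, gcEntryₗ_eq_zero_of_mem_gcDirections hy h0 (i + 1) j]
    · rw [(hy i j hij).1 hl, gcEntryₗ_eq_zero_of_mem_gcDirections hy h0 i (j + 1)]
  · exact dif_neg hij
termination_by n + 1 - (i + j)

lemma gcEntryₗ_gcFillPoint {m : ℕ × ℕ → ℝ → ℝ → ℝ} (hi : 1 ≤ i) (hj : 1 ≤ j) :
    gcEntryₗ n (i, j) (gcFillPoint n γ 0 m) = gcFill n γ 0 m i j :=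
  gcEntry_gcFillPoint hi hj

lemma gcFillPoint_mem_gcDirections (hγ : γ.IsSaturated n T) (m : ℕ × ℕ → ℝ → ℝ → ℝ) :
    gcFillPoint n γ 0 m ∈ gcDirections n γ := by
  intro i j hij
  obtain ⟨hi, hj, hle⟩ := id hij
  rw [gcEntryₗ_gcFillPoint hi hj, gcEntryₗ_gcFillPoint hi j.succ_pos,
    gcEntryₗ_gcFillPoint i.succ_pos hj]
  exact ⟨gcFill_of_not_hasLeft hle, gcFill_of_not_hasBelow hγ (fun _ _ _ _ _ ↦ rfl) hij⟩

theorem finrank_gcDirections (hγ : γ.IsSaturated n T) :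
    Module.finrank ℝ (gcDirections n γ) = γ.merges.ncard := by
  have : Fintype γ.merges := ((finite_GCIdx n).subset hγ.merges_subset_GCIdx).fintype
  let r : gcDirections n γ →ₗ[ℝ] γ.merges → ℝ :=
    LinearMap.pi (fun v : γ.merges ↦ gcEntryₗ n v) ∘ₗ (gcDirections n γ).subtype
  have hinj : Function.Injective r := by
    rw [injective_iff_map_eq_zero]
    rintro ⟨y, hy⟩ hr
    ext ⟨⟨i, j⟩, hij⟩
    have h0 := gcEntryₗ_eq_zero_of_mem_gcDirections hy (fun v hv ↦ congrFun hr ⟨v, hv⟩) i j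
    exact (gcEntry_of_mem hij).symm.trans h0
  have hsurj : Function.Surjective r := by
    intro c
    let m : ℕ × ℕ → ℝ → ℝ → ℝ := fun v _ _ ↦ if hv : v ∈ γ.merges then c ⟨v, hv⟩ else 0
    refine ⟨⟨_, gcFillPoint_mem_gcDirections hγ m⟩, funext fun ⟨⟨i, j⟩, hv⟩ ↦ ?_⟩
    obtain ⟨hi, hj, hle⟩ := hγ.merges_subset_GCIdx hv
    have hfill : gcFill n γ 0 m i j = c ⟨(i, j), hv⟩ :=
      (gcFill_of_hasLeft_of_hasBelow hle hv.1 hv.2).trans (dif_pos hv)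
    exact (gcEntryₗ_gcFillPoint hi hj).trans hfill
  rw [(LinearEquiv.ofBijective r ⟨hinj, hsurj⟩).finrank_eq, Module.finrank_fintype_fun_eq_card,
    ← Nat.card_eq_fintype_card, Nat.card_coe_set_eq]

end Directions

section Count

variable {n : ℕ} {lam : ℕ → ℝ} {γ : LGraph} {T : Set (ℕ × ℕ)} {F : Set (GCIdx n → ℝ)}

namespace LGraph.IsSaturated

lemma finite_V (h : γ.IsSaturated n T) : γ.V.Finite :=
  (Set.finite_Iic (n, n)).subset fun _ hv ↦
    ⟨by have := h.add_le hv; lia, by have := h.add_le hv; lia⟩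

lemma hasLeft_union_hasBelow (h : γ.IsSaturated n T) :
    {v | γ.HasLeft v} ∪ {v | γ.HasBelow v} = γ.V \ {(0, 0)} := by
  ext v
  constructor
  · rintro (hv | hv)
    · exact ⟨h.snd_mem hv, by rintro rfl; exact absurd (h.one_le_fst hv) (by simp)⟩
    · exact ⟨h.snd_mem hv, by rintro rfl; exact absurd (h.one_le_snd hv) (by simp)⟩
  · rintro ⟨hv, h0⟩
    refine (h.mem_V_iff_in (Nat.pos_of_ne_zero fun hv0 ↦ h0 ?_)).1 hv
    exact Prod.ext (Nat.eq_zero_of_add_eq_zero_right hv0) (Nat.eq_zero_of_add_eq_zero_left hv0)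

lemma E_eq_union_image (h : γ.IsSaturated n T) :
    γ.E = (fun v ↦ ((v.1 - 1, v.2), v)) '' {v | γ.HasLeft v} ∪
      (fun v ↦ ((v.1, v.2 - 1), v)) '' {v | γ.HasBelow v} := by
  ext ⟨u, v⟩
  constructor
  · intro he
    rcases h.eq_left_or_eq_below he with ⟨hv, rfl⟩ | ⟨hv, rfl⟩
    exacts [.inl ⟨v, hv, rfl⟩, .inr ⟨v, hv, rfl⟩]
  · rintro (⟨w, hw, he⟩ | ⟨w, hw, he⟩) <;> exact he ▸ hw

lemma ncard_E (h : γ.IsSaturated n T) :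
    γ.E.ncard = {v | γ.HasLeft v}.ncard + {v | γ.HasBelow v}.ncard := by
  have hleft : {v | γ.HasLeft v}.Finite := h.finite_V.subset fun _ ↦ h.snd_mem
  have hbelow : {v | γ.HasBelow v}.Finite := h.finite_V.subset fun _ ↦ h.snd_mem
  rw [h.E_eq_union_image, Set.ncard_union_eq ?_ (hleft.image _) (hbelow.image _),
    Set.ncard_image_of_injective _ fun _ _ hvw ↦ congrArg Prod.snd hvw,
    Set.ncard_image_of_injective _ fun _ _ hvw ↦ congrArg Prod.snd hvw]
  rw [Set.disjoint_left]
  rintro _ ⟨v, hv, rfl⟩ ⟨w, -, hvw⟩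
  have := h.one_le_fst hv
  simp only [Prod.mk.injEq] at hvw
  obtain ⟨⟨h1, -⟩, rfl⟩ := hvw
  lia

theorem ncard_E_add_one (h : γ.IsSaturated n T) (h0 : (0, 0) ∈ γ.V) :
    γ.E.ncard + 1 = γ.V.ncard + γ.merges.ncard := by
  have hleft : {v | γ.HasLeft v}.Finite := h.finite_V.subset fun _ ↦ h.snd_mem
  have hbelow : {v | γ.HasBelow v}.Finite := h.finite_V.subset fun _ ↦ h.snd_mem
  have hcount := Set.ncard_union_add_ncard_inter {v | γ.HasLeft v} {v | γ.HasBelow v} hleft hbelow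
  rw [h.hasLeft_union_hasBelow, ← h.ncard_E] at hcount
  rw [← hcount, ← Set.ncard_sdiff_singleton_add_one h0 h.finite_V, add_right_comm]
  rfl

end LGraph.IsSaturated

theorem IsGCFace.GCdim_eq_ldim (hlam : AntitoneOn lam (Set.Icc 1 n)) (hn : 0 < n)
    (hF : IsGCFace n lam F) : (GCdim n F : ℤ) = ldim (phiGC n lam F) := by
  have hγ := isSaturated_phiGC hF.subset_GCPoly hF.1 hn
  obtain ⟨x, hx⟩ := exists_isInteriorPoint hlam hγ
  have hdim : GCdim n F = (phiGC n lam F).merges.ncard := by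
    rw [GCdim, ← finrank_gcDirections hγ, ← hx.direction_affineSpan_psiGC, hF.psiGC_phiGC]
  have h0 : (0, 0) ∈ (phiGC n lam F).V := ⟨_, mem_phiE_horizontal hn, .inl rfl⟩
  have hcount := hγ.ncard_E_add_one h0
  rw [hdim, ldim]
  lia

end Count

/-- Lemma 2.7. The map `φ` is a poset isomorphism from the
faces of `P_λ` (ordered by inclusion) onto the faces of `Γ_k` (ordered by
inclusion of subgraphs), and it preserves dimensions. -/
theorem phiGC_posetIso (s : ℕ) (hs : 1 ≤ s) (k : ℕ → ℕ) (hk : ∀ i < s, 0 < k i)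
    (lam : ℕ → ℝ) (hlam : HasBlockStructure s k lam) :
    (∀ F F' : Set (GCIdx (nseq k s) → ℝ),
      IsGCFace (nseq k s) lam F → IsGCFace (nseq k s) lam F' →
      (F ⊆ F' ↔ phiGC (nseq k s) lam F ≤ phiGC (nseq k s) lam F')) ∧
    (∀ F : Set (GCIdx (nseq k s) → ℝ), IsGCFace (nseq k s) lam F →
      IsLadderFace s k (phiGC (nseq k s) lam F)) ∧
    (∀ γ : LGraph, IsLadderFace s k γ →
      ∃ F : Set (GCIdx (nseq k s) → ℝ), IsGCFace (nseq k s) lam F ∧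
        phiGC (nseq k s) lam F = γ) ∧
    (∀ F : Set (GCIdx (nseq k s) → ℝ), IsGCFace (nseq k s) lam F →
      (GCdim (nseq k s) F : ℤ) = ldim (phiGC (nseq k s) lam F)) := by
  have hn := nseq_pos hs hk
  have hsat : ∀ γ, IsLadderFace s k γ ↔
      γ.IsSaturated (nseq k s) (descentVertices (nseq k s) lam) := fun γ ↦ by
    rw [isLadderFace_iff_isSaturated hn, hlam.terminals_eq]
  refine ⟨fun F F' hF hF' ↦ hF.subset_iff_phiGC_le hF', fun F hF ↦ ?_, fun γ hγ ↦ ?_,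
    fun F hF ↦ hF.GCdim_eq_ldim hlam.antitoneOn hn⟩
  · exact (hsat _).2 (isSaturated_phiGC hF.subset_GCPoly hF.1 hn)
  · rw [hsat] at hγ
    obtain ⟨x, hx⟩ := exists_isInteriorPoint hlam.antitoneOn hγ
    exact ⟨psiGC _ lam γ, hx.isGCFace_psiGC, hx.phiGC_psiGC hγ hn⟩
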